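/- Fix integers d ≥ 2, q with 1 ≤ q ≤ d-1, γ with 0 ≤ γ ≤ q-1, and a real u > 0. Then lim_{K↑0} P(d,q,γ,K,u) = 1, i.e. as the curvature K < 0 tends to 0 the intersection probability tends to 1. -/

import Mathlib

open Real MeasureTheory Filter Asymptotics

/-- Surface area `ω_n = 2 π^{n/2} / Γ(n/2)` of the Euclidean unit sphere in `ℝ^n`. -/
noncomputable def omegaS (n : ℕ) : ℝ := 2 * Real.pi ^ ((n : ℝ) / 2) / Real.Gamma ((n : ℝ) / 2)

/-- The constant `D(d,q,γ)`. -/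
noncomputable def Dconst (d q γ : ℕ) : ℝ :=
  omegaS (γ + 1) * omegaS (q - γ) * omegaS (d - q) / (omegaS (d - q + γ + 1) * omegaS (d - γ))

/-- `R_K(x)`, the Euclidean (Beltrami–Klein) radius of a hyperbolic ball of radius `x`. -/
noncomputable def RK (K x : ℝ) : ℝ :=
  Real.sinh (Real.sqrt (-K) * x) /
    (Real.sqrt (-K) * Real.sqrt (1 + Real.sinh (Real.sqrt (-K) * x) ^ 2))

/-- `C_K(d,m,u)`, the invariant measure of the `m`-flats meeting the ball of radius `u`. -/
noncomputable def Cconst (K : ℝ) (d m : ℕ) (u : ℝ) : ℝ :=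
  omegaS (d - m) * Real.sqrt (-K) ^ (-(d : ℝ) + (m : ℝ) + 1) *
    ∫ r in (0:ℝ)..u,
      Real.cosh (Real.sqrt (-K) * r) ^ m * Real.sinh (Real.sqrt (-K) * r) ^ (d - m - 1)

/-- `P(d,q,γ,K,u)`, the hyperbolic intersection probability of the random flats `E` and `L`. -/
noncomputable def Pprob (d q γ : ℕ) (K u : ℝ) : ℝ :=
  Dconst d q γ * omegaS (d - γ) / Cconst K d (d - q + γ) u *
    ∫ r in (0:ℝ)..(1 / Real.sqrt (-K)),
      r ^ ((q : ℝ) - (γ : ℝ) - 1) *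
        ∫ z in (0:ℝ)..(min 1 (RK K u / r)),
          z ^ q * (1 - z ^ 2) ^ (((d : ℝ) - (q : ℝ)) / 2 - 1) *
            (1 + K * r ^ 2 * z ^ 2) ^ (-((d : ℝ) + 1) / 2)

/-- `F_{K,u}(δ)`, the distribution function of the distance of `E ∩ L` to the origin. -/
noncomputable def Fdist (d q γ : ℕ) (K u δ : ℝ) : ℝ :=
  Dconst d q γ * omegaS (d - γ) / Cconst K d (d - q + γ) u *
    ∫ r in (0:ℝ)..(RK K δ),
      r ^ ((q : ℝ) - (γ : ℝ) - 1) *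
        ∫ z in (0:ℝ)..(min 1 (RK K u / r)),
          z ^ q * (1 - z ^ 2) ^ (((d : ℝ) - (q : ℝ)) / 2 - 1) *
            (1 + K * r ^ 2 * z ^ 2) ^ (-((d : ℝ) + 1) / 2)

/-- `f_{d,q,γ,K}(δ)`, the density of the distance of `E ∩ L` to the origin. -/
noncomputable def fdens (d q γ : ℕ) (K u δ : ℝ) : ℝ :=
  Dconst d q γ * omegaS (d - γ) / Cconst K d (d - q + γ) u *
    (RK K δ ^ ((q : ℝ) - (γ : ℝ) - 1) / Real.cosh (Real.sqrt (-K) * δ) ^ 2) *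
    ∫ z in (0:ℝ)..(min 1 (RK K u / RK K δ)),
      z ^ q * (1 - z ^ 2) ^ (((d : ℝ) - (q : ℝ)) / 2 - 1) *
        (1 + K * RK K δ ^ 2 * z ^ 2) ^ (-((d : ℝ) + 1) / 2)

/-- The limiting constant `ρ(u,q,γ,κ)` in the critical phase. -/
noncomputable def rhoConst (u : ℝ) (q γ : ℕ) (κ : ℝ) : ℝ :=
  omegaS (γ + 1) * (2 * Real.pi) ^ (-((γ : ℝ) + 1) / 2) * u ^ (q + 1) *
    κ ^ (((γ : ℝ) + 1) / 2) *
    (∫ s in (0:ℝ)..u, Real.exp (κ * s ^ 2 / 2) * s ^ ((q : ℝ) - (γ : ℝ) - 1))⁻¹ *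
    ∫ r in (0:ℝ)..1,
      r ^ ((q : ℝ) - (γ : ℝ) - 1) *
        ∫ v in (0:ℝ)..(1 / r),
          v ^ q * Real.exp (-(1 / 2) * u ^ 2 * κ * v ^ 2 * (1 - r ^ 2))

/-!
In the Beltrami–Klein model the radial part of the invariant measure on `m`-flats is
`s ^ (d - m - 1) * (1 + K * s ^ 2) ^ (-(d + 1) / 2)` in the Euclidean distance `s`, so that
`C_K(d, m, u)` is, up to `ω_{d - m}`, its integral over `[0, R_K(u)]`. Exchanging the two integrals
in `P` and substituting `s = r * z` therefore exhibits `P` as an average, for the weight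
`z ^ γ * (1 - z ^ 2) ^ ((d - q) / 2 - 1)` on `[0, 1]`, of the conditional distribution function of
`s` given `s ≤ R_K(u)`, evaluated at `z / √(-K)`. That function equals `1` as soon as
`z ≥ √(-K) * R_K(u) = tanh (√(-K) * u)`, and the right-hand side tends to `0` with `K`.
-/

section BetaIntegrals

theorem integral_rpow_mul_one_sub_rpow {a b : ℝ} (ha : 0 < a) (hb : 0 < b) :
    ∫ x in (0:ℝ)..1, x ^ (a - 1) * (1 - x) ^ (b - 1) = ProbabilityTheory.beta a b := by
  rw [ProbabilityTheory.beta_eq_betaIntegralReal a b ha hb, Complex.betaIntegral,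
    ← Complex.ofReal_re (∫ x in (0:ℝ)..1, _), ← intervalIntegral.integral_ofReal]
  congr 1
  refine intervalIntegral.integral_congr fun x hx => ?_
  rw [Set.uIcc_of_le zero_le_one] at hx
  push_cast [Complex.ofReal_cpow hx.1, Complex.ofReal_cpow (sub_nonneg.2 hx.2)]
  rfl

theorem integral_pow_mul_one_sub_sq_rpow (p : ℕ) {b : ℝ} (hb : 0 < b) :
    ∫ z in (0:ℝ)..1, z ^ p * (1 - z ^ 2) ^ (b - 1) =
      ProbabilityTheory.beta ((p + 1) / 2) b / 2 := by
  have substitution := intervalIntegral.integral_comp_mul_deriv_of_deriv_nonneg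
    (a := 0) (b := 1) (f := fun z : ℝ => z ^ 2) (f' := fun z => 2 * z)
    (g := fun x => x ^ (((p : ℝ) + 1) / 2 - 1) * (1 - x) ^ (b - 1)) (by fun_prop)
    (fun z _ => by simpa using hasDerivAt_pow 2 z)
    (fun z hz => mul_nonneg zero_le_two ((min_eq_left zero_le_one).ge.trans hz.1.le))
  norm_num only at substitution
  rw [integral_rpow_mul_one_sub_rpow (by positivity) hb] at substitution
  rw [← substitution, ← intervalIntegral.integral_div]
  refine intervalIntegral.integral_congr_Ioo_of_le zero_le_one fun z hz => ?_
  have sq_rpow_mul_self : (z ^ 2) ^ (((p : ℝ) + 1) / 2 - 1) * z = z ^ p := by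
    rw [← Real.rpow_natCast z 2, ← Real.rpow_mul hz.1.le, ← Real.rpow_add_one hz.1.ne',
      ← Real.rpow_natCast z p]
    congr 1
    push_cast
    ring
  simp only [Function.comp_apply, ← sq_rpow_mul_self]
  ring

end BetaIntegrals

theorem omegaS_pos {n : ℕ} (hn : 0 < n) : 0 < omegaS n := by
  have : 0 < Real.Gamma ((n : ℝ) / 2) := Real.Gamma_pos_of_pos (by positivity)
  unfold omegaS
  positivity

theorem beta_half_half_div_two {a b : ℕ} (ha : 0 < a) (hb : 0 < b) :
    ProbabilityTheory.beta ((a : ℝ) / 2) ((b : ℝ) / 2) / 2 =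
      omegaS (a + b) / (omegaS a * omegaS b) := by
  have : 0 < Real.Gamma ((a : ℝ) / 2) := Real.Gamma_pos_of_pos (by positivity)
  have : 0 < Real.Gamma ((b : ℝ) / 2) := Real.Gamma_pos_of_pos (by positivity)
  have : 0 < Real.Gamma ((a : ℝ) / 2 + (b : ℝ) / 2) := Real.Gamma_pos_of_pos (by positivity)
  simp only [omegaS, ProbabilityTheory.beta, Nat.cast_add, add_div, Real.rpow_add Real.pi_pos]
  field_simp

/-- The weight `z ^ p * (1 - z ^ 2) ^ (e / 2 - 1)` on `[0, 1]`, which is, up to normalization, the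
density of the norm of the projection of a uniform point of the unit sphere of `ℝ ^ (p + 1 + e)` to
a subspace of dimension `p + 1`. It is the weight against which the intersection probability is an
average. -/
noncomputable def projectionWeight (p e : ℕ) (z : ℝ) : ℝ :=
  z ^ p * (1 - z ^ 2) ^ ((e : ℝ) / 2 - 1)

namespace projectionWeight

theorem integral_eq (p : ℕ) {e : ℕ} (he : 0 < e) :
    ∫ z in (0:ℝ)..1, projectionWeight p e z =
      omegaS (p + 1 + e) / (omegaS (p + 1) * omegaS e) := by
  rw [← beta_half_half_div_two p.succ_pos he, Nat.cast_succ]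
  exact integral_pow_mul_one_sub_sq_rpow p (by positivity)

theorem integral_pos (p : ℕ) {e : ℕ} (he : 0 < e) :
    0 < ∫ z in (0:ℝ)..1, projectionWeight p e z := by
  rw [integral_eq p he]
  exact div_pos (omegaS_pos (by positivity)) (mul_pos (omegaS_pos p.succ_pos) (omegaS_pos he))

theorem intervalIntegrable (p : ℕ) {e : ℕ} (he : 0 < e) :
    IntervalIntegrable (projectionWeight p e) volume 0 1 :=
  intervalIntegral.intervalIntegrable_of_integral_ne_zero (integral_pos p he).ne'

end projectionWeight

section IteratedIntegrals

theorem integral_min_eq_integral_indicator {a b c : ℝ} (hab : a ≤ b) (hac : a ≤ c) (f : ℝ → ℝ) :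
    ∫ z in a..min b c, f z = ∫ z in a..b, (Set.Iic c).indicator f z := by
  rw [intervalIntegral.integral_of_le (le_min hab hac), intervalIntegral.integral_of_le hab,
    setIntegral_indicator measurableSet_Iic, Set.Ioc_inter_Iic]

theorem integral_integral_mul_comp_mul {w Ψ : ℝ → ℝ} {a b C : ℝ} (T : ℝ)
    (hw : IntervalIntegrable w volume a b) (hΨ : Measurable Ψ) (hC : ∀ s, ‖Ψ s‖ ≤ C) :
    ∫ r in (0:ℝ)..T, ∫ z in a..b, z * w z * Ψ (r * z) =
      ∫ z in a..b, w z * ∫ s in (0:ℝ)..T * z, Ψ s := by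
  have integrable_prod : IntegrableOn (Function.uncurry fun r z => z * w z * Ψ (r * z))
      (Set.uIoc 0 T ×ˢ Set.uIoc a b) := by
    have hzw : Integrable (fun z => z * w z) (volume.restrict (Set.uIoc a b)) :=
      (hw.continuousOn_mul continuousOn_id).def'
    have : IsFiniteMeasure (volume.restrict (Set.uIoc 0 T)) := by
      rw [Set.uIoc]
      infer_instance
    rw [IntegrableOn, Measure.volume_eq_prod, ← Measure.prod_restrict]
    exact (hzw.comp_snd _).mul_bdd (hΨ.comp (by fun_prop)).aestronglyMeasurable
      (.of_forall fun _ => hC _)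
  rw [intervalIntegral_intervalIntegral_swap integrable_prod]
  refine intervalIntegral.integral_congr fun z _ => ?_
  simp only [intervalIntegral.integral_const_mul]
  rw [mul_right_comm, mul_comm, ← smul_eq_mul z, intervalIntegral.smul_integral_comp_mul_right,
    zero_mul]

end IteratedIntegrals

section KleinRadius

theorem one_sub_tanh_sq (x : ℝ) : 1 - Real.tanh x ^ 2 = (Real.cosh x ^ 2)⁻¹ := by
  have := Real.cosh_pos x
  rw [Real.tanh_eq_sinh_div_cosh]
  field_simp
  exact Real.cosh_sq_sub_sinh_sq x

theorem hasDerivAt_tanh (x : ℝ) : HasDerivAt Real.tanh (Real.cosh x ^ 2)⁻¹ x := by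
  have := (Real.hasDerivAt_sinh x).div (Real.hasDerivAt_cosh x) (Real.cosh_pos x).ne'
  rw [show Real.tanh = Real.sinh / Real.cosh from funext Real.tanh_eq_sinh_div_cosh]
  refine this.congr_deriv ?_
  rw [← sq, ← sq, Real.cosh_sq_sub_sinh_sq, one_div]

theorem tanh_pos {x : ℝ} (hx : 0 < x) : 0 < Real.tanh x := by
  rw [Real.tanh_eq_sinh_div_cosh]
  exact div_pos (Real.sinh_pos_iff.2 hx) (Real.cosh_pos x)

theorem RK_eq_tanh_div (K x : ℝ) : RK K x = Real.tanh (√(-K) * x) / √(-K) := by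
  rw [RK, ← Real.cosh_sq', Real.sqrt_sq (Real.cosh_pos _).le, Real.tanh_eq_sinh_div_cosh,
    div_div, mul_comm √(-K) (Real.cosh _)]

theorem RK_zero_right (K : ℝ) : RK K 0 = 0 := by
  simp [RK_eq_tanh_div]

variable {K : ℝ}

theorem RK_pos (hK : K < 0) {x : ℝ} (hx : 0 < x) : 0 < RK K x := by
  have : 0 < √(-K) := Real.sqrt_pos.2 (neg_pos.2 hK)
  rw [RK_eq_tanh_div]
  exact div_pos (tanh_pos (by positivity)) this

theorem one_add_mul_RK_sq (hK : K < 0) (x : ℝ) :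
    1 + K * RK K x ^ 2 = (Real.cosh (√(-K) * x) ^ 2)⁻¹ := by
  rw [RK_eq_tanh_div, div_pow, Real.sq_sqrt (by linarith), ← one_sub_tanh_sq]
  field_simp [hK.ne]
  ring

theorem hasDerivAt_RK (hK : K < 0) (x : ℝ) :
    HasDerivAt (RK K) (Real.cosh (√(-K) * x) ^ 2)⁻¹ x := by
  have : √(-K) ≠ 0 := (Real.sqrt_pos.2 (neg_pos.2 hK)).ne'
  rw [show RK K = fun x => Real.tanh (√(-K) * x) / √(-K) from funext (RK_eq_tanh_div K)]
  have deriv_arg : HasDerivAt (fun x => √(-K) * x) √(-K) x := by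
    simpa using (hasDerivAt_id x).const_mul √(-K)
  refine (((hasDerivAt_tanh _).comp x deriv_arg).div_const _).congr_deriv ?_
  field_simp

end KleinRadius

/-- The radial density, in the Beltrami–Klein model of curvature `K`, of the invariant measure on
flats of codimension `n + 1` in dimension `d`, as a function of the Euclidean distance `s` to the
origin and without the factor `ω_{n + 1}`. -/
noncomputable def kleinDensity (K : ℝ) (d n : ℕ) (s : ℝ) : ℝ :=
  s ^ n * (1 + K * s ^ 2) ^ (-((d : ℝ) + 1) / 2)

section KleinDensity

variable {K : ℝ}

theorem kleinDensity_RK_mul_deriv (hK : K < 0) (m n : ℕ) (x : ℝ) :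
    kleinDensity K (m + n + 1) n (RK K x) * (Real.cosh (√(-K) * x) ^ 2)⁻¹ =
      (√(-K) ^ n)⁻¹ * (Real.cosh (√(-K) * x) ^ m * Real.sinh (√(-K) * x) ^ n) := by
  have hk : 0 < √(-K) := Real.sqrt_pos.2 (neg_pos.2 hK)
  have hc : 0 < Real.cosh (√(-K) * x) := Real.cosh_pos _
  have rpow_eq_cosh_pow : (1 + K * RK K x ^ 2) ^ (-(((m + n + 1 : ℕ) : ℝ) + 1) / 2) =
      Real.cosh (√(-K) * x) ^ (m + n + 2) := by
    rw [one_add_mul_RK_sq hK, neg_div, Real.inv_rpow (by positivity), Real.rpow_neg (by positivity),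
      inv_inv, ← Real.rpow_natCast, ← Real.rpow_mul hc.le, ← Real.rpow_natCast]
    congr 1
    push_cast
    ring
  rw [kleinDensity, rpow_eq_cosh_pow, RK_eq_tanh_div, Real.tanh_eq_sinh_div_cosh]
  simp only [div_pow]
  field_simp
  ring

theorem Cconst_eq_integral_kleinDensity (hK : K < 0) {d m : ℕ} (hm : m < d) (u : ℝ) :
    Cconst K d m u = omegaS (d - m) * ∫ s in (0:ℝ)..RK K u, kleinDensity K d (d - m - 1) s := by
  obtain ⟨n, rfl⟩ : ∃ n, d = m + n + 1 := ⟨d - m - 1, by omega⟩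
  have substitution := intervalIntegral.integral_comp_mul_deriv_of_deriv_nonneg
    (a := 0) (b := u) (g := kleinDensity K (m + n + 1) n)
    (fun x _ => (hasDerivAt_RK hK x).continuousAt.continuousWithinAt)
    (fun x _ => hasDerivAt_RK hK x) (fun x _ => by positivity)
  simp only [Function.comp_apply, kleinDensity_RK_mul_deriv hK, RK_zero_right,
    intervalIntegral.integral_const_mul] at substitution
  have exponent : -((m + n + 1 : ℕ) : ℝ) + (m : ℝ) + 1 = -(n : ℝ) := by
    push_cast
    ring
  rw [Cconst, show m + n + 1 - m - 1 = n by omega, ← substitution, exponent,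
    Real.rpow_neg (Real.sqrt_nonneg _), Real.rpow_natCast, mul_assoc]

theorem one_add_mul_sq_pos_of_le_RK (hK : K < 0) {u s : ℝ} (hs : s ∈ Set.Icc 0 (RK K u)) :
    0 < 1 + K * s ^ 2 := by
  have : 0 < 1 + K * RK K u ^ 2 := by
    rw [one_add_mul_RK_sq hK]
    have := Real.cosh_pos (√(-K) * u)
    positivity
  have : s ^ 2 ≤ RK K u ^ 2 := pow_le_pow_left₀ hs.1 hs.2 2
  nlinarith

theorem continuousOn_kleinDensity (hK : K < 0) (d n : ℕ) (u : ℝ) :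
    ContinuousOn (kleinDensity K d n) (Set.Icc 0 (RK K u)) :=
  ContinuousOn.mul (by fun_prop) <| ContinuousOn.rpow_const (by fun_prop) fun _ hs =>
    .inl (one_add_mul_sq_pos_of_le_RK hK hs).ne'

theorem integral_kleinDensity_pos (hK : K < 0) (d n : ℕ) {u : ℝ} (hu : 0 < u) :
    0 < ∫ s in (0:ℝ)..RK K u, kleinDensity K d n s := by
  have hR := RK_pos hK hu
  refine intervalIntegral.intervalIntegral_pos_of_pos_on
    ((continuousOn_kleinDensity hK d n u).intervalIntegrable_of_Icc hR.le) (fun s hs => ?_) hR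
  have := one_add_mul_sq_pos_of_le_RK hK (Set.Ioo_subset_Icc_self hs)
  have := hs.1
  unfold kleinDensity
  positivity

end KleinDensity

/-- The Klein density restricted to the flats meeting the hyperbolic ball of radius `u`. -/
noncomputable def ballKleinDensity (K : ℝ) (d n : ℕ) (u : ℝ) : ℝ → ℝ :=
  (Set.Icc 0 (RK K u)).indicator (kleinDensity K d n)

namespace ballKleinDensity

variable {K : ℝ}

protected theorem nonneg (hK : K < 0) (d n : ℕ) (u s : ℝ) : 0 ≤ ballKleinDensity K d n u s := by
  refine Set.indicator_nonneg (fun s hs => ?_) s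
  have := one_add_mul_sq_pos_of_le_RK hK hs
  have := hs.1
  unfold kleinDensity
  positivity

protected theorem measurable (K : ℝ) (d n : ℕ) (u : ℝ) : Measurable (ballKleinDensity K d n u) := by
  refine Measurable.indicator ?_ measurableSet_Icc
  unfold kleinDensity
  fun_prop

protected theorem integrable (hK : K < 0) (d n : ℕ) (u : ℝ) :
    Integrable (ballKleinDensity K d n u) :=
  (continuousOn_kleinDensity hK d n u).integrableOn_Icc.integrable_indicator measurableSet_Icc

theorem exists_norm_le (hK : K < 0) (d n : ℕ) (u : ℝ) :
    ∃ C, ∀ s, ‖ballKleinDensity K d n u s‖ ≤ C := by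
  obtain ⟨C, hC⟩ := isCompact_Icc.exists_bound_of_continuousOn (continuousOn_kleinDensity hK d n u)
  refine ⟨max C 0, fun s => ?_⟩
  by_cases hs : s ∈ Set.Icc 0 (RK K u)
  · rw [ballKleinDensity, Set.indicator_of_mem hs]
    exact (hC s hs).trans (le_max_left _ _)
  · simp [ballKleinDensity, Set.indicator_of_notMem hs]

theorem integral_eq_integral_kleinDensity_min (hK : K < 0) (d n : ℕ) {u x : ℝ} (hu : 0 < u)
    (hx : 0 ≤ x) :
    ∫ s in (0:ℝ)..x, ballKleinDensity K d n u s =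
      ∫ s in (0:ℝ)..min x (RK K u), kleinDensity K d n s := by
  rw [integral_min_eq_integral_indicator hx (RK_pos hK hu).le]
  refine intervalIntegral.integral_congr fun s hs => ?_
  rw [Set.uIcc_of_le hx] at hs
  simp [ballKleinDensity, Set.indicator_apply, hs.1]

end ballKleinDensity

/-- The conditional distribution function, under the invariant measure on flats of codimension
`n + 1` meeting the hyperbolic ball of radius `u`, of the Euclidean distance to the origin in the
Beltrami–Klein model. -/
noncomputable def kleinCDF (K : ℝ) (d n : ℕ) (u x : ℝ) : ℝ :=
  (∫ s in (0:ℝ)..x, ballKleinDensity K d n u s) / ∫ s in (0:ℝ)..RK K u, kleinDensity K d n s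

namespace kleinCDF

variable {K : ℝ} {u : ℝ}

protected theorem continuous (hK : K < 0) (d n : ℕ) (u : ℝ) : Continuous (kleinCDF K d n u) :=
  ((ballKleinDensity.integrable hK d n u).continuous_primitive 0).div_const _

theorem eq_one (hK : K < 0) (d n : ℕ) (hu : 0 < u) {x : ℝ} (hx : RK K u ≤ x) :
    kleinCDF K d n u x = 1 := by
  rw [kleinCDF, ballKleinDensity.integral_eq_integral_kleinDensity_min hK d n hu
    ((RK_pos hK hu).le.trans hx), min_eq_right hx,
    div_self (integral_kleinDensity_pos hK d n hu).ne']

protected theorem monotone (hK : K < 0) (d n : ℕ) (hu : 0 < u) : Monotone (kleinCDF K d n u) := by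
  intro x y hxy
  have primitive_mono : ∫ s in (0:ℝ)..x, ballKleinDensity K d n u s ≤
      ∫ s in (0:ℝ)..y, ballKleinDensity K d n u s := by
    have integrable := ballKleinDensity.integrable hK d n u
    rw [← sub_nonneg, intervalIntegral.integral_interval_sub_left integrable.intervalIntegrable
      integrable.intervalIntegrable]
    exact intervalIntegral.integral_nonneg hxy fun s _ => ballKleinDensity.nonneg hK d n u s
  exact div_le_div_of_nonneg_right primitive_mono (integral_kleinDensity_pos hK d n hu).le

protected theorem nonneg (hK : K < 0) (d n : ℕ) (hu : 0 < u) {x : ℝ} (hx : 0 ≤ x) :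
    0 ≤ kleinCDF K d n u x := by
  simpa [kleinCDF] using kleinCDF.monotone hK d n hu hx

theorem le_one (hK : K < 0) (d n : ℕ) (hu : 0 < u) (x : ℝ) : kleinCDF K d n u x ≤ 1 :=
  (kleinCDF.monotone hK d n hu (le_max_left x (RK K u))).trans_eq
    (eq_one hK d n hu (le_max_right x (RK K u)))

theorem norm_le_one (hK : K < 0) (d n : ℕ) (hu : 0 < u) {x : ℝ} (hx : 0 ≤ x) :
    ‖kleinCDF K d n u x‖ ≤ 1 := by
  rw [Real.norm_of_nonneg (kleinCDF.nonneg hK d n hu hx)]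
  exact le_one hK d n hu x

end kleinCDF

section IntersectionProbability

theorem pow_mul_integral_eq_integral_projectionWeight (K : ℝ) (d n γ e : ℕ) {u r : ℝ}
    (hR : 0 ≤ RK K u) (hr : 0 < r) :
    r ^ n * ∫ z in (0:ℝ)..min 1 (RK K u / r), z ^ (γ + n + 1) *
        (1 - z ^ 2) ^ ((e : ℝ) / 2 - 1) * (1 + K * r ^ 2 * z ^ 2) ^ (-((d : ℝ) + 1) / 2) =
      ∫ z in (0:ℝ)..1, z * projectionWeight γ e z * ballKleinDensity K d n u (r * z) := by
  rw [integral_min_eq_integral_indicator zero_le_one (by positivity),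
    ← intervalIntegral.integral_const_mul]
  refine intervalIntegral.integral_congr fun z hz => ?_
  rw [Set.uIcc_of_le zero_le_one] at hz
  by_cases hzR : z ≤ RK K u / r
  · have mem_Icc : r * z ∈ Set.Icc 0 (RK K u) :=
      ⟨mul_nonneg hr.le hz.1, (le_div_iff₀' hr).1 hzR⟩
    simp only [Set.indicator_of_mem (Set.mem_Iic.2 hzR), ballKleinDensity,
      Set.indicator_of_mem mem_Icc, kleinDensity, projectionWeight, mul_pow, pow_add]
    ring_nf
  · have notMem_Icc : r * z ∉ Set.Icc 0 (RK K u) := fun h => hzR ((le_div_iff₀' hr).2 h.2)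
    simp [Set.indicator_of_notMem (mt Set.mem_Iic.1 hzR), ballKleinDensity,
      Set.indicator_of_notMem notMem_Icc]

theorem Dconst_mul_omegaS_div (d q γ : ℕ) (hq : q < d) (hγ : γ < q) :
    Dconst d q γ * omegaS (d - γ) / omegaS (q - γ) =
      (∫ z in (0:ℝ)..1, projectionWeight γ (d - q) z)⁻¹ := by
  have : 0 < omegaS (d - γ) := omegaS_pos (by omega)
  have : 0 < omegaS (q - γ) := omegaS_pos (by omega)
  rw [projectionWeight.integral_eq γ (by omega), Dconst,
    show d - q + γ + 1 = γ + 1 + (d - q) by omega]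
  field_simp

theorem Pprob_eq_average_kleinCDF {d q γ : ℕ} (hq : q < d) (hγ : γ < q) {K u : ℝ} (hK : K < 0)
    (hu : 0 < u) :
    Pprob d q γ K u =
      (∫ z in (0:ℝ)..1, projectionWeight γ (d - q) z)⁻¹ *
        ∫ z in (0:ℝ)..1, projectionWeight γ (d - q) z * kleinCDF K d (q - γ - 1) u (z / √(-K)) := by
  obtain ⟨C, hC⟩ := ballKleinDensity.exists_norm_le hK d (q - γ - 1) u
  have iterated_integral : (∫ r in (0:ℝ)..1 / √(-K), r ^ ((q : ℝ) - γ - 1) *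
      ∫ z in (0:ℝ)..min 1 (RK K u / r), z ^ q * (1 - z ^ 2) ^ (((d : ℝ) - q) / 2 - 1) *
        (1 + K * r ^ 2 * z ^ 2) ^ (-((d : ℝ) + 1) / 2)) =
      ∫ z in (0:ℝ)..1, projectionWeight γ (d - q) z *
        ∫ s in (0:ℝ)..1 / √(-K) * z, ballKleinDensity K d (q - γ - 1) u s := by
    rw [← integral_integral_mul_comp_mul _ (projectionWeight.intervalIntegrable γ (by omega))
      (ballKleinDensity.measurable ..) hC]
    refine intervalIntegral.integral_congr_Ioo_of_le (by positivity) fun r hr => ?_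
    rw [← pow_mul_integral_eq_integral_projectionWeight K d (q - γ - 1) γ (d - q)
      (RK_pos hK hu).le hr.1, Nat.cast_sub hq.le, show γ + (q - γ - 1) + 1 = q by omega,
      ← Real.rpow_natCast r (q - γ - 1), Nat.cast_sub (by omega), Nat.cast_sub hγ.le,
      Nat.cast_one]
  have codim : d - (d - q + γ) = q - γ := by omega
  rw [Pprob, iterated_integral, Cconst_eq_integral_kleinDensity hK (by omega), codim,
    ← div_div, Dconst_mul_omegaS_div d q γ hq hγ, div_mul_eq_mul_div, mul_div_assoc,
    ← intervalIntegral.integral_div]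
  simp only [kleinCDF, mul_div_assoc, one_div_mul_eq_div]

theorem tendsto_tanh_sqrt_neg_mul (u : ℝ) :
    Tendsto (fun K => Real.tanh (√(-K) * u)) (nhds 0) (nhds 0) := by
  have continuous_tanh : Continuous Real.tanh :=
    continuous_iff_continuousAt.2 fun x => (hasDerivAt_tanh x).continuousAt
  have : Continuous fun K => Real.tanh (√(-K) * u) := continuous_tanh.comp (by fun_prop)
  simpa using this.tendsto 0

theorem eventually_kleinCDF_div_sqrt_eq_one (d n : ℕ) {u z : ℝ} (hu : 0 < u) (hz : 0 < z) :
    ∀ᶠ K in nhdsWithin 0 (Set.Iio 0), kleinCDF K d n u (z / √(-K)) = 1 := by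
  filter_upwards [self_mem_nhdsWithin, nhdsWithin_le_nhds
    ((tendsto_tanh_sqrt_neg_mul u).eventually_lt_const hz)] with K hK tanh_lt
  refine kleinCDF.eq_one hK d n hu ?_
  rw [RK_eq_tanh_div]
  gcongr

theorem tendsto_integral_mul_kleinCDF {w : ℝ → ℝ} (hw : IntervalIntegrable w volume 0 1) (d n : ℕ)
    {u : ℝ} (hu : 0 < u) :
    Tendsto (fun K => ∫ z in (0:ℝ)..1, w z * kleinCDF K d n u (z / √(-K)))
      (nhdsWithin 0 (Set.Iio 0)) (nhds (∫ z in (0:ℝ)..1, w z)) := by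
  refine intervalIntegral.tendsto_integral_filter_of_dominated_convergence (fun z => ‖w z‖)
    ?measurable ?bound hw.norm ?limit
  case measurable =>
    filter_upwards [self_mem_nhdsWithin] with K hK
    exact hw.aestronglyMeasurable_restrict_uIoc.mul
      ((kleinCDF.continuous hK d n u).comp (by fun_prop)).aestronglyMeasurable
  case bound =>
    filter_upwards [self_mem_nhdsWithin] with K hK
    refine .of_forall fun z hz => ?_
    rw [Set.uIoc_of_le zero_le_one] at hz
    rw [norm_mul]
    exact mul_le_of_le_one_right (norm_nonneg _)
      (kleinCDF.norm_le_one hK d n hu (div_nonneg hz.1.le (Real.sqrt_nonneg _)))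
  case limit =>
    refine .of_forall fun z hz => tendsto_const_nhds.congr' ?_
    rw [Set.uIoc_of_le zero_le_one] at hz
    filter_upwards [eventually_kleinCDF_div_sqrt_eq_one d n hu hz.1] with K hK
    rw [hK, mul_one]

end IntersectionProbability

/-- as the curvature `K < 0` tends to `0`, the intersection probability tends to 1. -/
theorem intersection_prob_tendsto_one_flat (d q γ : ℕ) (hd : 2 ≤ d) (hq1 : 1 ≤ q)
    (hq2 : q ≤ d - 1) (hγ : γ ≤ q - 1) (u : ℝ) (hu : 0 < u) :
    Tendsto (fun K : ℝ => Pprob d q γ K u) (nhdsWithin 0 (Set.Iio 0)) (nhds 1) := by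
  have hqd : q < d := by omega
  have hγq : γ < q := by omega
  have hdq : 0 < d - q := by omega
  have average_tendsto := (tendsto_integral_mul_kleinCDF
    (projectionWeight.intervalIntegrable γ hdq) d (q - γ - 1) hu).const_mul
    (∫ z in (0:ℝ)..1, projectionWeight γ (d - q) z)⁻¹
  rw [inv_mul_cancel₀ (projectionWeight.integral_pos γ hdq).ne'] at average_tendsto
  refine average_tendsto.congr' ?_
  filter_upwards [self_mem_nhdsWithin] with K hK
  exact (Pprob_eq_average_kleinCDF hqd hγq hK hu).symm
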